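/- Let A = ⟨Q,Σ⟩ be a PFA with |Q| = n and |Σ| = m, and let ℓ > 0. The map sending a carefully synchronizing word w = a_{χ(1)}⋯a_{χ(ℓ)} of length ℓ for A to the assignment on the letter variables given by x_{i,t} ↦ 1 if χ(t) = i and x_{i,t} ↦ 0 otherwise is a bijection between the set of carefully synchronizing words of length ℓ for A and the set of restrictions to the letter variables of satisfying assignments of the SAT instance (V,C) encoding (A,ℓ). -/

import Mathlib

open Set

/-- The extension of the transition function of a PFA (with states `Fin n` and letters
`Fin m`) to subsets of states and words: `δ(S,ε) = S`, `δ(S,va) = ⋃_{q ∈ δ(S,v)} δ(q,a)`. -/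
def pfaExt {n m : ℕ} (δ : Fin n → Fin m → Option (Fin n))
    (S : Set (Fin n)) (w : List (Fin m)) : Set (Fin n) :=
  w.foldl (fun T a => {p | ∃ q ∈ T, δ q a = some p}) S

/-- A nonempty word `w = a₁⋯a_ℓ` is carefully synchronizing for the PFA `δ` if (C1) its
first letter is defined at every state, (C2) for `1 < t ≤ ℓ` the letter `a_t` is defined
at every state of `δ(Q, a₁⋯a_{t-1})`, and (C3) `|δ(Q,w)| = 1`. -/
def CarefulSync {n m : ℕ} (δ : Fin n → Fin m → Option (Fin n)) (w : List (Fin m)) : Prop :=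
  w ≠ [] ∧
  (∀ t : Fin w.length, ∀ q ∈ pfaExt δ Set.univ (w.take t.val), (δ q (w.get t)).isSome) ∧
  (pfaExt δ Set.univ w).ncard = 1

/-- Boolean variables of the SAT instance encoding `(A, ℓ)`: letter variables `x i t`
(`1 ≤ i ≤ m`, `1 ≤ t ≤ ℓ`) and state variables `y j t` (`1 ≤ j ≤ n`, `0 ≤ t ≤ ℓ`). -/
inductive SatVar (n m ℓ : ℕ) : Type where
  | x : Fin m → Fin ℓ → SatVar n m ℓ
  | y : Fin n → Fin (ℓ + 1) → SatVar n m ℓ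
deriving DecidableEq

/-- A literal: a variable together with a polarity (`true` = positive, `false` = negated). -/
abbrev SatLit (n m ℓ : ℕ) := SatVar n m ℓ × Bool

/-- A clause is a disjunction of literals, represented as a list. -/
abbrev SatClause (n m ℓ : ℕ) := List (SatLit n m ℓ)

/-- A truth assignment satisfies a clause if it makes at least one of its literals true. -/
def SatisfiesClause {n m ℓ : ℕ} (φ : SatVar n m ℓ → Bool) (c : SatClause n m ℓ) : Prop :=
  ∃ l ∈ c, φ l.1 = l.2

/-- A truth assignment satisfies a set of clauses if it satisfies every clause in it. -/
def Satisfies {n m ℓ : ℕ} (φ : SatVar n m ℓ → Bool) (C : Set (SatClause n m ℓ)) : Prop :=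
  ∀ c ∈ C, SatisfiesClause φ c

/-- The group `I` of initial clauses: the unit clauses `y_{j,0}` for `1 ≤ j ≤ n`. -/
def clausesI (n m ℓ : ℕ) : Set (SatClause n m ℓ) :=
  {c | ∃ j : Fin n, c = [(SatVar.y j 0, true)]}

/-- The group `L` of letter clauses: for each `t`, the clause `x_{1,t} ∨ ⋯ ∨ x_{m,t}`
and the clauses `¬x_{r,t} ∨ ¬x_{s,t}` for `1 ≤ r < s ≤ m`. -/
def clausesL (n m ℓ : ℕ) : Set (SatClause n m ℓ) :=
  {c | ∃ t : Fin ℓ, c = (List.finRange m).map fun i => ((SatVar.x i t : SatVar n m ℓ), true)} ∪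
  {c | ∃ t : Fin ℓ, ∃ r s : Fin m, r < s ∧
    c = [(SatVar.x r t, false), (SatVar.x s t, false)]}

/-- The group `T` of transition clauses: for each `t` and each pair `(q_j, a_i)`, the
clause `¬y_{j,t-1} ∨ ¬x_{i,t} ∨ y_{k,t}` if `δ(q_j, a_i) = {q_k}`, and the clause
`¬y_{j,t-1} ∨ ¬x_{i,t}` if `δ(q_j, a_i)` is undefined. -/
def clausesT {n m : ℕ} (δ : Fin n → Fin m → Option (Fin n)) (ℓ : ℕ) :
    Set (SatClause n m ℓ) :=
  {c | ∃ (t : Fin ℓ) (j : Fin n) (i : Fin m) (k : Fin n), δ j i = some k ∧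
    c = [(SatVar.y j t.castSucc, false), (SatVar.x i t, false), (SatVar.y k t.succ, true)]} ∪
  {c | ∃ (t : Fin ℓ) (j : Fin n) (i : Fin m), δ j i = none ∧
    c = [(SatVar.y j t.castSucc, false), (SatVar.x i t, false)]}

/-- The group `S` of synchronization clauses: `¬y_{r,ℓ} ∨ ¬y_{s,ℓ}` for `1 ≤ r < s ≤ n`. -/
def clausesS (n m ℓ : ℕ) : Set (SatClause n m ℓ) :=
  {c | ∃ r s : Fin n, r < s ∧
    c = [(SatVar.y r (Fin.last ℓ), false), (SatVar.y s (Fin.last ℓ), false)]}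

/-- The set `C = I ∪ L ∪ T ∪ S` of clauses of the SAT instance encoding `(A, ℓ)`. -/
def encodingClauses {n m : ℕ} (δ : Fin n → Fin m → Option (Fin n)) (ℓ : ℕ) :
    Set (SatClause n m ℓ) :=
  clausesI n m ℓ ∪ clausesL n m ℓ ∪ clausesT δ ℓ ∪ clausesS n m ℓ

/-! A satisfying assignment selects exactly one letter at each time, hence a word, and its active
state sets are closed under reading that word: they form a careful trace in the sense below. The
sets actually reached by the word are the least such trace, so a trace exists exactly when the
word can be read carefully from all of `Q`, and synchronization passes from any trace down to
the least one. Careful reading never loses all states, so the clauses `S`, which only say that at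
most one state is active at the end, already force exactly one. -/

section CarefulTrace

variable {n m ℓ : ℕ} {δ : Fin n → Fin m → Option (Fin n)} {S : Set (Fin n)} {χ : Fin ℓ → Fin m}
  {Y : Fin (ℓ + 1) → Set (Fin n)}

/-- The sets of states `δ(S, a_{χ(1)}⋯a_{χ(t)})`, for `0 ≤ t ≤ ℓ`, that are visited when the word
spelled by `χ` is read from `S`. -/
def pfaRun (δ : Fin n → Fin m → Option (Fin n)) (S : Set (Fin n)) (χ : Fin ℓ → Fin m)
    (t : Fin (ℓ + 1)) : Set (Fin n) :=
  pfaExt δ S ((List.ofFn χ).take t)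

theorem pfaRun_zero : pfaRun δ S χ 0 = S := rfl

theorem pfaRun_succ (t : Fin ℓ) :
    pfaRun δ S χ t.succ = {p | ∃ q ∈ pfaRun δ S χ t.castSucc, δ q (χ t) = some p} := by
  have take_succ : (List.ofFn χ).take (t + 1) = (List.ofFn χ).take t ++ [χ t] := by
    simp [List.take_succ_eq_append_getElem]
  simp only [pfaRun, pfaExt, Fin.val_succ, Fin.val_castSucc, take_succ, List.foldl_append,
    List.foldl_cons, List.foldl_nil]

theorem pfaRun_last : pfaRun δ S χ (Fin.last ℓ) = pfaExt δ S (List.ofFn χ) := by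
  rw [pfaRun, Fin.val_last, List.take_of_length_le List.length_ofFn.le]

/-- `Y` is a careful trace of the word `χ` from `S`: it covers `S` at time `0`, and each letter is
defined on all of the current set and maps it into the next one. Only inclusions are required, so
`Y t` may be larger than the set of states visited at time `t`; this is how the state variables
of a satisfying assignment behave. -/
structure IsCarefulTrace (δ : Fin n → Fin m → Option (Fin n)) (S : Set (Fin n)) (χ : Fin ℓ → Fin m)
    (Y : Fin (ℓ + 1) → Set (Fin n)) : Prop where
  init : S ⊆ Y 0
  step : ∀ t : Fin ℓ, ∀ q ∈ Y t.castSucc, ∃ p ∈ Y t.succ, δ q (χ t) = some p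

theorem isCarefulTrace_pfaRun_iff :
    IsCarefulTrace δ S χ (pfaRun δ S χ) ↔
      ∀ t : Fin ℓ, ∀ q ∈ pfaRun δ S χ t.castSucc, (δ q (χ t)).isSome := by
  constructor
  · intro h t q hq
    obtain ⟨p, -, hp⟩ := h.step t q hq
    exact Option.isSome_of_eq_some hp
  · intro h
    refine ⟨pfaRun_zero.ge, fun t q hq => ?_⟩
    obtain ⟨p, hp⟩ := Option.isSome_iff_exists.mp (h t q hq)
    exact ⟨p, pfaRun_succ t ▸ ⟨q, hq, hp⟩, hp⟩

namespace IsCarefulTrace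

theorem pfaRun_subset (h : IsCarefulTrace δ S χ Y) (t : Fin (ℓ + 1)) : pfaRun δ S χ t ⊆ Y t := by
  induction t using Fin.induction with
  | zero => exact pfaRun_zero.trans_subset h.init
  | succ t ih =>
    rw [pfaRun_succ]
    rintro p ⟨q, hq, hqp⟩
    obtain ⟨p', hp', hqp'⟩ := h.step t q (ih hq)
    rwa [Option.some_inj.mp (hqp.symm.trans hqp')]

theorem isCarefulTrace_pfaRun (h : IsCarefulTrace δ S χ Y) :
    IsCarefulTrace δ S χ (pfaRun δ S χ) := by
  refine isCarefulTrace_pfaRun_iff.mpr fun t q hq => ?_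
  obtain ⟨p, -, hp⟩ := h.step t q (h.pfaRun_subset _ hq)
  exact Option.isSome_of_eq_some hp

theorem nonempty (h : IsCarefulTrace δ S χ Y) (hS : S.Nonempty) (t : Fin (ℓ + 1)) :
    (Y t).Nonempty := by
  induction t using Fin.induction with
  | zero => exact hS.mono h.init
  | succ t ih =>
    obtain ⟨q, hq⟩ := ih
    obtain ⟨p, hp, -⟩ := h.step t q hq
    exact ⟨p, hp⟩

end IsCarefulTrace

theorem carefulSync_ofFn_iff_pfaRun (hℓ : 0 < ℓ) :
    CarefulSync δ (List.ofFn χ) ↔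
      IsCarefulTrace δ univ χ (pfaRun δ univ χ) ∧
        (pfaRun δ univ χ (Fin.last ℓ)).ncard = 1 := by
  have ofFn_ne_nil : List.ofFn χ ≠ [] := by simpa [List.ofFn_eq_nil_iff] using hℓ.ne'
  rw [CarefulSync, isCarefulTrace_pfaRun_iff, pfaRun_last,
    ← (finCongr (List.length_ofFn (f := χ))).forall_congr_right (q := fun t : Fin ℓ =>
      ∀ q ∈ pfaRun δ univ χ t.castSucc, (δ q (χ t)).isSome)]
  simp [ofFn_ne_nil, pfaRun, Fin.cast]

theorem carefulSync_ofFn_iff_exists_isCarefulTrace (hn : 0 < n) (hℓ : 0 < ℓ) :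
    CarefulSync δ (List.ofFn χ) ↔
      ∃ Y, IsCarefulTrace δ univ χ Y ∧ (Y (Fin.last ℓ)).Subsingleton := by
  rw [carefulSync_ofFn_iff_pfaRun hℓ, ncard_eq_one,
    exists_eq_singleton_iff_nonempty_subsingleton]
  constructor
  · rintro ⟨hrun, -, hsub⟩
    exact ⟨_, hrun, hsub⟩
  · rintro ⟨Y, hY, hsub⟩
    have hrun := hY.isCarefulTrace_pfaRun
    have univ_nonempty : (univ : Set (Fin n)).Nonempty := ⟨⟨0, hn⟩, mem_univ _⟩
    exact ⟨hrun, hrun.nonempty univ_nonempty _, hsub.anti (hY.pfaRun_subset _)⟩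

end CarefulTrace

theorem subsingleton_iff_forall_lt_notMem {α : Type*} [LinearOrder α] {s : Set α} :
    s.Subsingleton ↔ ∀ a b, a < b → a ∈ s → b ∉ s := by
  rw [← not_nontrivial_iff, nontrivial_iff_exists_lt]
  grind

section Clauses

variable {n m ℓ : ℕ} {δ : Fin n → Fin m → Option (Fin n)} {φ : SatVar n m ℓ → Bool}

/-- The letters `a_i` whose variable `x_{i,t}` is true under `φ`. -/
def activeLetters (φ : SatVar n m ℓ → Bool) (t : Fin ℓ) : Set (Fin m) :=
  {i | φ (SatVar.x i t) = true}

/-- The states `q_j` whose variable `y_{j,t}` is true under `φ`. -/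
def activeStates (φ : SatVar n m ℓ → Bool) (t : Fin (ℓ + 1)) : Set (Fin n) :=
  {j | φ (SatVar.y j t) = true}

theorem satisfiesClause_nil : SatisfiesClause φ [] ↔ False := by
  simp [SatisfiesClause]

theorem satisfiesClause_cons_true {v : SatVar n m ℓ} {c : SatClause n m ℓ} :
    SatisfiesClause φ ((v, true) :: c) ↔ φ v = true ∨ SatisfiesClause φ c := by
  simp [SatisfiesClause]

theorem satisfiesClause_cons_false {v : SatVar n m ℓ} {c : SatClause n m ℓ} :
    SatisfiesClause φ ((v, false) :: c) ↔ (φ v = true → SatisfiesClause φ c) := by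
  simp [SatisfiesClause, imp_iff_not_or]

theorem satisfiesClause_pair_false {v v' : SatVar n m ℓ} :
    SatisfiesClause φ [(v, false), (v', false)] ↔ (φ v = true → ¬φ v' = true) := by
  simp only [satisfiesClause_cons_false, satisfiesClause_nil]

theorem satisfies_union {C D : Set (SatClause n m ℓ)} :
    Satisfies φ (C ∪ D) ↔ Satisfies φ C ∧ Satisfies φ D :=
  forall₂_or_left

theorem satisfies_clausesI_iff :
    Satisfies φ (clausesI n m ℓ) ↔ univ ⊆ activeStates φ 0 := by
  simp [Satisfies, clausesI, SatisfiesClause, activeStates, eq_univ_iff_forall]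

theorem satisfies_clausesL_iff :
    Satisfies φ (clausesL n m ℓ) ↔
      ∃ χ : Fin ℓ → Fin m, ∀ t, activeLetters φ t = {χ t} := by
  rw [← Classical.skolem (p := fun t i => activeLetters φ t = {i})]
  simp only [exists_eq_singleton_iff_nonempty_subsingleton,
    subsingleton_iff_forall_lt_notMem, forall_and]
  rw [clausesL, satisfies_union]
  apply and_congr
  · simp [Satisfies, SatisfiesClause, activeLetters, Set.Nonempty]
  · constructor
    · exact fun h t r s hrs => satisfiesClause_pair_false.mp (h _ ⟨t, r, s, hrs, rfl⟩)
    · rintro h _ ⟨t, r, s, hrs, rfl⟩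
      exact satisfiesClause_pair_false.mpr (h t r s hrs)

theorem satisfies_clausesT_iff :
    Satisfies φ (clausesT δ ℓ) ↔
      ∀ t : Fin ℓ, ∀ i ∈ activeLetters φ t, ∀ j ∈ activeStates φ t.castSucc,
        ∃ k ∈ activeStates φ t.succ, δ j i = some k := by
  simp only [activeLetters, activeStates, mem_ofPred_eq]
  constructor
  · intro h t i hi j hj
    cases hδ : δ j i with
    | none => simpa [SatisfiesClause, hi, hj] using h _ (Or.inr ⟨t, j, i, hδ, rfl⟩)
    | some k => simpa [SatisfiesClause, hi, hj] using h _ (Or.inl ⟨t, j, i, k, hδ, rfl⟩)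
  · rintro h _ (⟨t, j, i, k, hδ, rfl⟩ | ⟨t, j, i, hδ, rfl⟩)
    · simp only [satisfiesClause_cons_false, satisfiesClause_cons_true]
      intro hj hi
      obtain ⟨k', hk', hδ'⟩ := h t i hi j hj
      exact Or.inl (Option.some_inj.mp (hδ'.symm.trans hδ) ▸ hk')
    · simp only [satisfiesClause_cons_false, satisfiesClause_nil]
      intro hj hi
      obtain ⟨k, -, hδ'⟩ := h t i hi j hj
      exact Option.some_ne_none k (hδ'.symm.trans hδ)

theorem satisfies_clausesS_iff :
    Satisfies φ (clausesS n m ℓ) ↔ (activeStates φ (Fin.last ℓ)).Subsingleton := by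
  rw [subsingleton_iff_forall_lt_notMem]
  constructor
  · exact fun h r s hrs => satisfiesClause_pair_false.mp (h _ ⟨r, s, hrs, rfl⟩)
  · rintro h _ ⟨r, s, hrs, rfl⟩
    exact satisfiesClause_pair_false.mpr (h r s hrs)

theorem satisfies_encodingClauses_iff :
    Satisfies φ (encodingClauses δ ℓ) ↔
      ∃ χ : Fin ℓ → Fin m, (∀ t, activeLetters φ t = {χ t}) ∧
        IsCarefulTrace δ univ χ (activeStates φ) ∧
        (activeStates φ (Fin.last ℓ)).Subsingleton := by
  rw [encodingClauses, satisfies_union, satisfies_union, satisfies_union, satisfies_clausesI_iff,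
    satisfies_clausesL_iff, satisfies_clausesT_iff, satisfies_clausesS_iff]
  constructor
  · rintro ⟨⟨⟨hI, χ, hχ⟩, hT⟩, hS⟩
    exact ⟨χ, hχ, ⟨hI, fun t => hT t (χ t) (hχ t ▸ mem_singleton _)⟩, hS⟩
  · rintro ⟨χ, hχ, ⟨hI, hT⟩, hS⟩
    refine ⟨⟨⟨hI, χ, hχ⟩, fun t i hi => ?_⟩, hS⟩
    obtain rfl : i = χ t := (hχ t).subset hi
    exact hT t

theorem exists_activeLetters_eq_singleton_and_activeStates_eq (χ : Fin ℓ → Fin m)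
    (Y : Fin (ℓ + 1) → Set (Fin n)) :
    ∃ φ : SatVar n m ℓ → Bool, (∀ t, activeLetters φ t = {χ t}) ∧ activeStates φ = Y := by
  classical
  refine ⟨fun
    | .x i t => decide (i = χ t)
    | .y j t => decide (j ∈ Y t), fun t => ?_, funext fun t => ?_⟩
  · ext i
    simp [activeLetters]
  · ext j
    simp [activeStates]

theorem carefulSync_ofFn_iff_exists_satisfies (hn : 0 < n) (hℓ : 0 < ℓ) {χ : Fin ℓ → Fin m} :
    CarefulSync δ (List.ofFn χ) ↔
      ∃ φ, Satisfies φ (encodingClauses δ ℓ) ∧ ∀ t, activeLetters φ t = {χ t} := by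
  rw [carefulSync_ofFn_iff_exists_isCarefulTrace hn hℓ]
  constructor
  · rintro ⟨Y, hY, hsub⟩
    obtain ⟨φ, hφ, rfl⟩ := exists_activeLetters_eq_singleton_and_activeStates_eq χ Y
    exact ⟨φ, satisfies_encodingClauses_iff.mpr ⟨χ, hφ, hY, hsub⟩, hφ⟩
  · rintro ⟨φ, hsat, hφ⟩
    obtain ⟨χ', hφ', htrace, hsub⟩ := satisfies_encodingClauses_iff.mp hsat
    obtain rfl : χ' = χ := funext fun t => singleton_injective ((hφ' t).symm.trans (hφ t))
    exact ⟨activeStates φ, htrace, hsub⟩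

end Clauses

section LetterAssignment

variable {n m ℓ : ℕ}

/-- The assignment `x_{i,t} ↦ 1` iff the `t`-th letter of `w` is `a_i`. Positions beyond the end
of `w` carry no letter, so there every variable is `0`. -/
def letterAssignment (ℓ : ℕ) (w : List (Fin m)) (i : Fin m) (t : Fin ℓ) : Bool :=
  decide (w[t.val]? = some i)

theorem injOn_letterAssignment :
    InjOn (letterAssignment ℓ) {w : List (Fin m) | w.length = ℓ} := by
  intro w hw w' hw' h
  refine List.ext_getElem (hw.trans hw'.symm) fun t ht ht' => ?_
  have same_letter := congrFun₂ h w[t] ⟨t, hw ▸ ht⟩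
  simpa [letterAssignment, ht, ht', eq_comm] using same_letter

theorem letterAssignment_ofFn (χ : Fin ℓ → Fin m) (i : Fin m) (t : Fin ℓ) :
    letterAssignment ℓ (List.ofFn χ) i t = decide (i = χ t) := by
  simp [letterAssignment, eq_comm]

theorem letterAssignment_ofFn_eq_iff {χ : Fin ℓ → Fin m} {φ : SatVar n m ℓ → Bool} :
    (letterAssignment ℓ (List.ofFn χ) = fun i t => φ (SatVar.x i t)) ↔
      ∀ t, activeLetters φ t = {χ t} := by
  simp only [funext_iff, letterAssignment_ofFn, Set.ext_iff]
  rw [forall_comm]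
  refine forall₂_congr fun t i => ?_
  rw [Bool.eq_iff_iff, decide_eq_true_iff]
  exact Iff.comm

end LetterAssignment

/-- The map sending a carefully synchronizing word `w = a_{χ(1)} ⋯ a_{χ(ℓ)}` of length
`ℓ` to the assignment of the letter variables given by `x_{i,t} ↦ 1` iff `χ(t) = i`
is a bijection between the set of carefully synchronizing words of length `ℓ` for `A`
and the set of restrictions to the letter variables of satisfying assignments of the
SAT instance encoding `(A, ℓ)`. -/
theorem csw_letter_assignment_bijection {n m ℓ : ℕ} (hn : 0 < n) (hm : 0 < m) (hℓ : 0 < ℓ)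
    (δ : Fin n → Fin m → Option (Fin n)) :
    Set.BijOn
      (fun (w : List (Fin m)) => fun (i : Fin m) (t : Fin ℓ) => decide (w[t.val]? = some i))
      {w : List (Fin m) | w.length = ℓ ∧ CarefulSync δ w}
      {g : Fin m → Fin ℓ → Bool | ∃ φ : SatVar n m ℓ → Bool,
        Satisfies φ (encodingClauses δ ℓ) ∧ g = fun i t => φ (SatVar.x i t)} := by
  change BijOn (letterAssignment ℓ) _ _
  refine ⟨?_, injOn_letterAssignment.mono fun w hw => hw.1, ?_⟩
  · rintro w ⟨hlen, hw⟩
    obtain ⟨χ, rfl⟩ : ∃ χ : Fin ℓ → Fin m, List.ofFn χ = w := hlen ▸ ⟨w.get, List.ofFn_get w⟩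
    obtain ⟨φ, hsat, hφ⟩ := (carefulSync_ofFn_iff_exists_satisfies hn hℓ).mp hw
    exact ⟨φ, hsat, letterAssignment_ofFn_eq_iff.mpr hφ⟩
  · rintro _ ⟨φ, hsat, rfl⟩
    obtain ⟨χ, hφ, -⟩ := satisfies_encodingClauses_iff.mp hsat
    have hχ := (carefulSync_ofFn_iff_exists_satisfies hn hℓ).mpr ⟨φ, hsat, hφ⟩
    exact ⟨List.ofFn χ, ⟨List.length_ofFn, hχ⟩, letterAssignment_ofFn_eq_iff.mpr hφ⟩
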